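/- Let θ ∈ 𝒳ₙ and let j ∈ {1,…,n} be any index attaining the minimum of θ^{k+1} − θ^k over k ∈ {1,…,n} (with θ^{n+1} = θ¹ + 2π and φ^{n+1} := φ¹). Then φ^{j+1}(θ) − φ^j(θ) ≥ π − n·(θ^{j+1} − θ^j)/2 ≥ 0. -/

import Mathlib

open MeasureTheory Filter Set
open scoped Real Topology ENNReal Classical

noncomputable section

/-- The configuration space `𝒳ₙ` of `n` ordered points on (a lift of) the circle:
`θ¹ < θ² < ⋯ < θⁿ < θ¹ + 2π`. -/
def Xspace (n : ℕ) : Set (Fin n → ℝ) :=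
  {x | StrictMono x ∧ ∀ i j : Fin n, x i < x j + 2 * π}

/-- The value `θ^{j+1}`, with the convention `θ^{n+1} = θ¹ + 2π`. -/
def nextVal {n : ℕ} (x : Fin n → ℝ) (j : Fin n) : ℝ :=
  if h : (j : ℕ) + 1 < n then x ⟨(j : ℕ) + 1, h⟩ else x ⟨0, j.pos⟩ + 2 * π

/-- The gap `θ^{j+1} - θ^j` (with wrap-around convention). -/
def gap {n : ℕ} (x : Fin n → ℝ) (j : Fin n) : ℝ := nextVal x j - x j

/-- The minimal gap `Δ(θ) = min_j (θ^{j+1} - θ^j)`. -/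
def minGap {n : ℕ} (x : Fin n → ℝ) : ℝ := ⨅ j : Fin n, gap x j

/-- `d(θ) := max_j |2π/n - (θ^{j+1} - θ^j)|`. -/
def dGap {n : ℕ} (x : Fin n → ℝ) : ℝ := ⨆ j : Fin n, |2 * π / n - gap x j|

/-- `φ^j(θ) = ∑_{k ≠ j} cot((θ^j - θ^k)/2)`. -/
def phi {n : ℕ} (x : Fin n → ℝ) (j : Fin n) : ℝ :=
  ∑ k ∈ Finset.univ.erase j, Real.cot ((x j - x k) / 2)

/-- `φ_a^j := (a/4) φ^j`. -/
def phiA {n : ℕ} (a : ℝ) (x : Fin n → ℝ) (j : Fin n) : ℝ := a / 4 * phi x j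

/-- Absolute continuity of every coordinate of `θ` on `[0, T]`: each component is the
integral of a (locally) integrable function. -/
def AbsCont {n : ℕ} (T : ℝ) (θ : ℝ → Fin n → ℝ) : Prop :=
  ∃ v : ℝ → Fin n → ℝ, (∀ j, IntegrableOn (fun s => v s j) (Icc 0 T)) ∧
    ∀ t ∈ Icc (0 : ℝ) T, ∀ j, θ t j = θ 0 j + ∫ s in (0 : ℝ)..t, v s j

/-- Truncated multiradial Dirichlet energy `J_T(θ)`. -/
def mEnergy (n : ℕ) (T : ℝ) (θ : ℝ → Fin n → ℝ) : ℝ≥0∞ :=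
  if AbsCont T θ then
    ENNReal.ofReal (1 / 2) *
      ∫⁻ s in Ioc (0 : ℝ) T,
        ENNReal.ofReal (∑ j, (deriv (fun t => θ t j) s - 2 * phi (θ s) j) ^ 2)
  else ⊤

/-- Multiradial Dirichlet energy `J(θ) = lim_{T→∞} J_T(θ)`, the supremum of the
nondecreasing family `J_T(θ)`. -/
def mEnergyInf (n : ℕ) (θ : ℝ → Fin n → ℝ) : ℝ≥0∞ := ⨆ T : ℝ, mEnergy n T θ

/-- The cyclically next index, with the convention `φ^{n+1} := φ¹`. -/
def succIdx {n : ℕ} (j : Fin n) : Fin n :=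
  if h : (j : ℕ) + 1 < n then ⟨(j : ℕ) + 1, h⟩ else ⟨0, j.pos⟩

/-! Let `a` be half the minimal gap and let `0 = u₀ < ⋯ < uₙ₋₁ = π - a` be half the distances from
`θ^{j+1}` forward to `θ^{j+1}, …, θ^{j+n}`, so that `φ^{j+1} - φ^j = ∑ (cot (uₖ + a) - cot uₖ)`,
where `cot 0` and `cot π` are read as `0`. The terms `k = 0` and `k = n - 1` contribute `2 cot a`.
The increment of `cot` over an interval of length `a` inside `(0, π)` is smallest for intervals near
the endpoints, so the outermost two of the other terms turn `2 cot a` into at least `2 cot (2a)`,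
the next two turn this into at least `2 cot (3a)`, and so on up to `2 cot (n a / 2) ≥ π - n a`; for
odd `n` the last half step, from a single middle term, is the midpoint convexity of `cot`. -/

section Cotangent

open Real

theorem cot_zero : cot 0 = 0 := by
  simp [← tan_inv_eq_cot]

theorem cot_neg (t : ℝ) : cot (-t) = -cot t := by
  simp only [← tan_inv_eq_cot, tan_neg, inv_neg]

theorem cot_periodic : Function.Periodic cot π := fun t => by
  simp only [← tan_inv_eq_cot, tan_periodic t]

theorem pi_div_two_sub_le_cot {t : ℝ} (ht : 0 < t) (ht' : t ≤ π / 2) : π / 2 - t ≤ cot t := by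
  rw [← tan_inv_eq_cot, ← tan_pi_div_two_sub]
  exact le_tan (by linarith) (by linarith)

theorem cot_add_sub_cot {t a : ℝ} (ht : sin t ≠ 0) (hta : sin (t + a) ≠ 0) :
    cot (t + a) - cot t = -(sin a / (sin t * sin (t + a))) := by
  have hsin : sin a = sin (t + a) * cos t - cos (t + a) * sin t := by
    rw [← sin_sub, add_sub_cancel_left]
  rw [cot_eq_cos_div_sin, cot_eq_cos_div_sin, hsin]
  field_simp
  ring

theorem sin_mul_sin_add_le {s t a : ℝ} (hs : 0 ≤ 2 * s + a) (hst : s ≤ t)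
    (hts : s + t + a ≤ π) : sin s * sin (s + a) ≤ sin t * sin (t + a) := by
  have hdiff : cos (2 * s + a) - cos (2 * t + a) = 2 * (sin (s + t + a) * sin (t - s)) := by
    rw [← neg_sub s t, sin_neg, cos_sub_cos]
    ring_nf
  have hprod (r : ℝ) : 2 * (sin r * sin (r + a)) = cos a - cos (2 * r + a) := by
    rw [← mul_assoc, two_mul_sin_mul_sin, ← cos_neg a]
    ring_nf
  have hnonneg : 0 ≤ sin (s + t + a) * sin (t - s) :=
    mul_nonneg (sin_nonneg_of_nonneg_of_le_pi (by linarith) hts)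
      (sin_nonneg_of_nonneg_of_le_pi (by linarith) (by linarith))
  linarith [hprod s, hprod t]

theorem cot_add_sub_cot_le_cot_add_sub_cot {s t a : ℝ} (ha : 0 ≤ a) (hs : 0 < s) (hst : s ≤ t)
    (hts : s + t + a ≤ π) : cot (s + a) - cot s ≤ cot (t + a) - cot t := by
  have hsin_pos {r : ℝ} (hsr : s ≤ r) (hr : r ≤ t + a) : 0 < sin r :=
    sin_pos_of_pos_of_lt_pi (by linarith) (by linarith)
  have hs₀ : 0 < sin s := hsin_pos le_rfl (by linarith)
  have hs₁ : 0 < sin (s + a) := hsin_pos (by linarith) (by linarith)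
  have ht₀ : 0 < sin t := hsin_pos hst (by linarith)
  have ht₁ : 0 < sin (t + a) := hsin_pos (by linarith) le_rfl
  rw [cot_add_sub_cot hs₀.ne' hs₁.ne', cot_add_sub_cot ht₀.ne' ht₁.ne', neg_le_neg_iff]
  exact div_le_div_of_nonneg_left (sin_nonneg_of_nonneg_of_le_pi ha (by linarith))
    (mul_pos hs₀ hs₁) (sin_mul_sin_add_le (by linarith) hst hts)

theorem two_mul_cot_add_half_le {s a : ℝ} (ha : 0 ≤ a) (hs : 0 < s) (hsa : 2 * s + a ≤ π) :
    2 * cot (s + a / 2) ≤ cot s + cot (s + a) := by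
  have h := cot_add_sub_cot_le_cot_add_sub_cot (s := s) (t := s + a / 2) (a := a / 2)
    (by linarith) hs (by linarith) (by linarith)
  rw [add_assoc s, add_halves] at h
  linarith

theorem two_mul_cot_add_le_sum {a : ℝ} (ha : 0 ≤ a) (p : ℕ) {c : ℝ} {u : ℕ → ℝ} (hc : 0 < c)
    (hlow : ∀ k < p, c + k * a ≤ u k) (hupp : ∀ k < p, u k + (p - k) * a + c ≤ π) :
    2 * cot (c + p * a / 2) ≤
      2 * cot c + ∑ k ∈ Finset.range p, (cot (u k + a) - cot (u k)) := by
  induction p using Nat.twoStepInduction generalizing c u with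
  | zero => simp
  | one =>
    have hlow₀ := hlow 0 one_pos
    have hupp₀ := hupp 0 one_pos
    push_cast at hlow₀ hupp₀
    have hmid := two_mul_cot_add_half_le ha hc (by linarith)
    have hincr := cot_add_sub_cot_le_cot_add_sub_cot ha hc (t := u 0) (by linarith) (by linarith)
    simp only [Nat.cast_one, one_mul, Finset.sum_range_one]
    linarith
  | more p ih _ =>
    have hpa : 0 ≤ p * a := by positivity
    have hlow_first := hlow 0 (by omega)
    have hupp_first := hupp 0 (by omega)
    have hlow_last := hlow (p + 1) (by omega)
    have hupp_last := hupp (p + 1) (by omega)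
    push_cast at hlow_first hupp_first hlow_last hupp_last
    have hfirst := cot_add_sub_cot_le_cot_add_sub_cot ha hc (t := u 0) (by linarith) (by linarith)
    have hlast := cot_add_sub_cot_le_cot_add_sub_cot ha hc (t := u (p + 1))
      (by linarith) (by linarith)
    have hinner := ih (c := c + a) (u := fun k => u (k + 1)) (by linarith)
      (fun k hk => by have := hlow (k + 1) (by omega); push_cast at this; linarith)
      (fun k hk => by have := hupp (k + 1) (by omega); push_cast at this; linarith)
    have hcenter : c + (p + 2 : ℕ) * a / 2 = c + a + p * a / 2 := by push_cast; ring
    rw [hcenter, Finset.sum_range_succ, Finset.sum_range_succ']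
    linarith

theorem two_mul_cot_le_sum_of_spaced {a : ℝ} (ha : 0 < a) {p : ℕ} {u : ℕ → ℝ}
    (hu : Monotone fun k : ℕ => u k - k * a) (hfirst : u 0 = 0) (hlast : u (p + 1) + a = π) :
    2 * cot ((p + 2) * a / 2) ≤ ∑ k ∈ Finset.range (p + 2), (cot (u k + a) - cot (u k)) := by
  have hinner := two_mul_cot_add_le_sum ha.le p (u := fun k => u (k + 1)) ha
    (fun k _ => by have := hu (Nat.zero_le (k + 1)); push_cast at this; linarith)
    (fun k hk => by
      have := hu (Nat.succ_le_succ hk.le)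
      push_cast at this
      linarith)
  have hcot_last : cot (u (p + 1) + a) - cot (u (p + 1)) = cot a := by
    have hcot_pi : cot π = 0 := cot_periodic.eq.trans cot_zero
    rw [hlast, eq_sub_of_add_eq hlast, hcot_pi, cot_periodic.sub_eq', cot_neg]
    ring
  have hcenter : (p + 2) * a / 2 = a + p * a / 2 := by ring
  rw [Finset.sum_range_succ, Finset.sum_range_succ', hcot_last, hfirst, zero_add,
    cot_zero, hcenter]
  linarith

end Cotangent

theorem sum_range_add_of_periodic {M : Type*} [AddCancelCommMonoid M] {f : ℕ → M} {n : ℕ}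
    (hf : Function.Periodic f n) (s : ℕ) :
    ∑ k ∈ Finset.range n, f (s + k) = ∑ k ∈ Finset.range n, f k := by
  apply add_left_cancel (a := ∑ k ∈ Finset.range s, f k)
  rw [← Finset.sum_range_add, add_comm s, Finset.sum_range_add, add_comm]
  simp only [add_comm n, hf _]

section CyclicLift

variable {n : ℕ} [NeZero n] (x : Fin n → ℝ)

/-- The extension of the configuration `x` to all natural indices by the convention
`θ^{i+n} = θ^i + 2π`, indexed from `0`. -/
def cyclicLift (i : ℕ) : ℝ :=
  x (Fin.ofNat n i) + (i / n : ℕ) * (2 * π)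

theorem cyclicLift_val (j : Fin n) : cyclicLift x j = x j := by
  simp [cyclicLift, Nat.div_eq_of_lt j.isLt]

theorem cyclicLift_add_self (i : ℕ) : cyclicLift x (i + n) = cyclicLift x i + 2 * π := by
  have hmod : Fin.ofNat n (i + n) = Fin.ofNat n i := Fin.ext (Nat.add_mod_right i n)
  rw [cyclicLift, cyclicLift, hmod, Nat.add_div_right i (NeZero.pos n)]
  push_cast
  ring

theorem cyclicLift_val_add_one (j : Fin n) : cyclicLift x (j + 1) = nextVal x j := by
  unfold nextVal
  split_ifs with h
  · exact cyclicLift_val x ⟨j + 1, h⟩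
  · have hlast : (j : ℕ) + 1 = 0 + n := by omega
    rw [hlast, cyclicLift_add_self]
    exact congrArg (· + 2 * π) (cyclicLift_val x ⟨0, j.pos⟩)

theorem cyclicLift_add_one_sub (i : ℕ) :
    cyclicLift x (i + 1) - cyclicLift x i = gap x (Fin.ofNat n i) := by
  have hper : Function.Periodic (fun i => cyclicLift x (i + 1) - cyclicLift x i) n := fun i => by
    simp only [add_right_comm i n 1, cyclicLift_add_self, add_sub_add_right_eq_sub]
  rw [← hper.map_mod_nat i, gap, ← cyclicLift_val_add_one, ← cyclicLift_val x (Fin.ofNat n i),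
    Fin.val_ofNat]

variable {x} in
theorem monotone_cyclicLift_sub_mul {δ : ℝ} (hδ : ∀ k, δ ≤ gap x k) :
    Monotone fun i : ℕ => cyclicLift x i - i * δ :=
  monotone_nat_of_le_succ fun i => by
    have := hδ (Fin.ofNat n i)
    rw [← cyclicLift_add_one_sub] at this
    push_cast
    linarith

variable {x} in
theorem mul_le_two_pi_of_le_gap {δ : ℝ} (hδ : ∀ k, δ ≤ gap x k) : n * δ ≤ 2 * π := by
  have h := monotone_cyclicLift_sub_mul hδ (Nat.zero_le (0 + n))
  simp only [cyclicLift_add_self] at h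
  push_cast at h
  linarith

theorem phi_ofNat_eq_sum (m s : ℕ) :
    phi x (Fin.ofNat n m) =
      ∑ k ∈ Finset.range n, Real.cot ((cyclicLift x m - cyclicLift x (s + k)) / 2) := by
  have hper : Function.Periodic
      (fun i => Real.cot ((cyclicLift x m - cyclicLift x i) / 2)) n := fun i => by
    have hshift : (cyclicLift x m - (cyclicLift x i + 2 * π)) / 2 =
        (cyclicLift x m - cyclicLift x i) / 2 - π := by ring
    simp only [cyclicLift_add_self, hshift, cot_periodic.sub_eq]
  -- In `phi` the index `k = j` may be included since `cot 0 = 1 / 0 = 0`.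
  rw [sum_range_add_of_periodic hper, Finset.sum_range, phi,
    Finset.sum_erase _ (by rw [sub_self, zero_div, cot_zero])]
  refine Finset.sum_congr rfl fun k _ => ?_
  rw [cyclicLift_val, cyclicLift, ← cot_periodic.nat_mul (m / n)]
  ring_nf

theorem succIdx_eq_ofNat (j : Fin n) : succIdx j = Fin.ofNat n (j + 1) := by
  unfold succIdx
  ext
  split_ifs with h
  · exact (Nat.mod_eq_of_lt h).symm
  · have hlast : (j : ℕ) + 1 = n := by omega
    simp [hlast]

theorem phi_succIdx_sub_phi_eq_sum (j : Fin n) :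
    phi x (succIdx j) - phi x j =
      ∑ k ∈ Finset.range n,
        (Real.cot ((cyclicLift x (j + 1 + k) - nextVal x j) / 2 + gap x j / 2) -
          Real.cot ((cyclicLift x (j + 1 + k) - nextVal x j) / 2)) := by
  have hphi := phi_ofNat_eq_sum x j (j + 1)
  have hphi_succ := phi_ofNat_eq_sum x (j + 1) (j + 1)
  rw [Fin.ofNat_val_eq_self, cyclicLift_val] at hphi
  rw [← succIdx_eq_ofNat, cyclicLift_val_add_one] at hphi_succ
  rw [hphi, hphi_succ, ← Finset.sum_sub_distrib]
  refine Finset.sum_congr rfl fun k _ => ?_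
  rw [← neg_sub _ (nextVal x j), ← neg_sub _ (x j), neg_div, neg_div, cot_neg, cot_neg,
    neg_sub_neg, gap, ← add_div, sub_add_sub_cancel]

end CyclicLift

theorem gap_pos {n : ℕ} {x : Fin n → ℝ} (hx : x ∈ Xspace n) (j : Fin n) : 0 < gap x j := by
  unfold gap nextVal
  split_ifs with h
  · exact sub_pos.mpr (hx.1 (Nat.lt_succ_self j))
  · exact sub_pos.mpr (hx.2 _ _)

theorem gap_eq_two_pi (x : Fin 1 → ℝ) (j : Fin 1) : gap x j = 2 * π := by
  rw [gap, nextVal, dif_neg (by omega), Subsingleton.elim ⟨0, j.pos⟩ j, add_sub_cancel_left]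

theorem two_mul_cot_le_phi_succIdx_sub_phi {n : ℕ} {x : Fin n → ℝ} (hx : x ∈ Xspace n)
    {j : Fin n} (hj : ∀ k, gap x j ≤ gap x k) :
    2 * Real.cot (n * gap x j / 4) ≤ phi x (succIdx j) - phi x j := by
  obtain _ | _ | p := n
  · exact j.elim0
  · have hright_angle : ((0 + 1 : ℕ) : ℝ) * gap x j / 4 = π / 2 := by
      rw [gap_eq_two_pi]
      push_cast
      ring
    rw [hright_angle, Subsingleton.elim (α := Fin 1) (succIdx j) j, sub_self,
      Real.cot_eq_cos_div_sin, Real.cos_pi_div_two, zero_div, mul_zero]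
  · have hspaced : Monotone fun k : ℕ =>
        (cyclicLift x (j + 1 + k) - nextVal x j) / 2 - k * (gap x j / 2) := fun k l hkl => by
      have := monotone_cyclicLift_sub_mul hj (add_le_add_right hkl (j + 1))
      push_cast at this
      linarith
    have hlast : cyclicLift x (j + 1 + (p + 1)) = x j + 2 * π := by
      rw [← cyclicLift_val x j, ← cyclicLift_add_self]
      congr 1
      omega
    have hcot := two_mul_cot_le_sum_of_spaced (half_pos (gap_pos hx j)) hspaced
      (by rw [add_zero, cyclicLift_val_add_one, sub_self, zero_div])
      (by rw [hlast, gap]; ring)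
    have hangle : ((p + 2 : ℕ) : ℝ) * gap x j / 4 = (p + 2) * (gap x j / 2) / 2 := by
      push_cast
      ring
    rwa [phi_succIdx_sub_phi_eq_sum, hangle]

/-- If `θ ∈ 𝒳ₙ` and `j` attains the minimal gap, then
`φ^{j+1}(θ) - φ^j(θ) ≥ π - n (θ^{j+1} - θ^j)/2 ≥ 0`. -/
theorem phi_difference_estimate_at_min_gap
    (n : ℕ) (hn : 1 ≤ n) (x : Fin n → ℝ) (hx : x ∈ Xspace n)
    (j : Fin n) (hj : ∀ k : Fin n, gap x j ≤ gap x k) :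
    π - n * gap x j / 2 ≤ phi x (succIdx j) - phi x j ∧
      0 ≤ π - n * gap x j / 2 := by
  have : NeZero n := ⟨by omega⟩
  have hgap : 0 < gap x j := gap_pos hx j
  have hperimeter : n * gap x j ≤ 2 * π := mul_le_two_pi_of_le_gap hj
  have hcot : π / 2 - n * gap x j / 4 ≤ Real.cot (n * gap x j / 4) :=
    pi_div_two_sub_le_cot (by positivity) (by linarith)
  have hphi := two_mul_cot_le_phi_succIdx_sub_phi hx hj
  exact ⟨by linarith, by linarith⟩

end
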